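/- Let G be a simple graph on a finite vertex type V, let t assign to each edge of G a nonnegative real traversal time, let u, v ∈ V, and let p be a path from u to v in G. Define an edge-weight function w by w(e) = 0 if e is an edge of p and w(e) = T otherwise, where T is the sum of t(e) over all edges e of G. Then for every path q from u to v in G, the cost of p is at most the cost of q, where the cost of a path is the sum of w(e) + t(e) over its edges. In other words, p is a shortest u–v path with respect to the combined cost w + t. -/

import Mathlib

/-!
The only path from `u` to `v` using no edge outside a given path `p` is `p` itself. Hence a walk
from `u` to `v` either traverses every edge of `p`, and so costs at least as much as `p` because
costs are nonnegative, or it uses an edge off `p`, for which alone it pays at least `T`, an upper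
bound for the cost of `p`.
-/

section Paths

open SimpleGraph

variable {V : Type*} {G : SimpleGraph V} {u v : V}

theorem eq_of_isPath_of_edges_subset {p q : G.Walk u v} (hp : p.IsPath) (hq : q.IsPath)
    (hqp : q.edges ⊆ p.edges) : q = p := by
  induction p with
  | nil => exact (Walk.isPath_iff_nil.mp hq).eq_nil
  | @cons u x v hux p ih =>
    cases q with
    | nil => exact absurd (Walk.isPath_iff_nil.mp hp) Walk.not_nil_cons
    | @cons _ y _ huy q =>
      obtain rfl : y = x := by
        simpa only [Walk.snd_cons] using hp.eq_snd_of_mem_edges (hqp List.mem_cons_self)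
      rw [Walk.cons_isPath_iff] at hp hq
      have hqp_tail : q.edges ⊆ p.edges := fun e he => by
        have he_ne : e ≠ s(u, y) := by
          rintro rfl
          exact hq.2 (q.fst_mem_support_of_mem_edges he)
        exact (List.mem_cons.mp (hqp (List.mem_cons_of_mem _ he))).resolve_left he_ne
      rw [ih hp.1 hq.1 hqp_tail]

theorem edges_sublist_of_isPath_of_edges_subset {p : G.Walk u v} (hp : p.IsPath)
    (q : G.Walk u v) (hqp : q.edges ⊆ p.edges) : p.edges.Sublist q.edges := by
  classical
  have hbypass : q.bypass = p :=
    eq_of_isPath_of_edges_subset hp q.bypass_isPath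
      (List.Subset.trans q.edges_bypass_subset_edges hqp)
  exact hbypass ▸ q.edges_bypass_sublist_edges

end Paths

section Cost

open SimpleGraph

variable {V M : Type*} {G : SimpleGraph V} {u v : V} [AddCommMonoid M]

/-- The cost of a walk with respect to edge weights `c`, each edge being counted as often as the
walk traverses it. -/
def walkCost (c : Sym2 V → M) (p : G.Walk u v) : M :=
  (p.edges.map c).sum

theorem walkCost_congr {c d : Sym2 V → M} {p : G.Walk u v} (hcd : ∀ e ∈ p.edges, c e = d e) :
    walkCost c p = walkCost d p :=
  congrArg List.sum (List.map_congr_left hcd)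

variable [Preorder M] [IsOrderedAddMonoid M] {c : Sym2 V → M}

theorem walkCost_nonneg (hc : ∀ e ∈ G.edgeSet, 0 ≤ c e) (p : G.Walk u v) : 0 ≤ walkCost c p :=
  List.sum_nonneg (List.forall_mem_map.mpr fun e he => hc e (p.edges_subset_edgeSet he))

theorem le_walkCost_of_mem_edges (hc : ∀ e ∈ G.edgeSet, 0 ≤ c e) {p : G.Walk u v} {e : Sym2 V}
    (he : e ∈ p.edges) : c e ≤ walkCost c p :=
  List.single_le_sum (List.forall_mem_map.mpr fun f hf => hc f (p.edges_subset_edgeSet hf))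
    _ (List.mem_map_of_mem he)

theorem walkCost_le_of_edges_sublist {x y : V} {p : G.Walk u v} {q : G.Walk x y}
    (hc : ∀ e ∈ G.edgeSet, 0 ≤ c e) (hpq : p.edges.Sublist q.edges) :
    walkCost c p ≤ walkCost c q :=
  (hpq.map c).sum_le_sum (List.forall_mem_map.mpr fun e he => hc e (q.edges_subset_edgeSet he))

theorem walkCost_le_sum_edgeFinset [Fintype G.edgeSet] (hc : ∀ e ∈ G.edgeSet, 0 ≤ c e)
    {p : G.Walk u v} (hp : p.IsTrail) : walkCost c p ≤ ∑ e ∈ G.edgeFinset, c e := by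
  classical
  calc walkCost c p = ∑ e ∈ p.edges.toFinset, c e := (List.sum_toFinset c hp.edges_nodup).symm
    _ ≤ ∑ e ∈ G.edgeFinset, c e := by
      refine Finset.sum_le_sum_of_subset_of_nonneg (fun e he => ?_) fun e he _ =>
        hc e (mem_edgeFinset.mp he)
      exact mem_edgeFinset.mpr (p.edges_subset_edgeSet (List.mem_toFinset.mp he))

theorem walkCost_le_of_isPath_of_forall_notMem_edges (hc : ∀ e ∈ G.edgeSet, 0 ≤ c e)
    {p : G.Walk u v} (hp : p.IsPath)
    (hoff : ∀ e ∈ G.edgeSet, e ∉ p.edges → walkCost c p ≤ c e) (q : G.Walk u v) :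
    walkCost c p ≤ walkCost c q := by
  by_cases! hqp : ∀ e ∈ q.edges, e ∈ p.edges
  · exact walkCost_le_of_edges_sublist hc (edges_sublist_of_isPath_of_edges_subset hp q hqp)
  · obtain ⟨e, heq, hep⟩ := hqp
    exact (hoff e (q.edges_subset_edgeSet heq) hep).trans (le_walkCost_of_mem_edges hc heq)

theorem stmt_12_general [DecidableEq V] {t : Sym2 V → M} (ht : ∀ e ∈ G.edgeSet, 0 ≤ t e)
    {p : G.Walk u v} (hp : p.IsPath) {T : M} (hT : walkCost t p ≤ T)
    {w : Sym2 V → M} (hw : ∀ e, w e = if e ∈ p.edges then 0 else T) (q : G.Walk u v) :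
    walkCost (fun e => w e + t e) p ≤ walkCost (fun e => w e + t e) q := by
  have hw_nonneg (e : Sym2 V) : 0 ≤ w e := by
    rw [hw]
    split_ifs
    exacts [le_rfl, (walkCost_nonneg ht p).trans hT]
  have hcost : walkCost (fun e => w e + t e) p = walkCost t p :=
    walkCost_congr fun e he => by rw [hw, if_pos he, zero_add]
  refine walkCost_le_of_isPath_of_forall_notMem_edges
    (fun e he => add_nonneg (hw_nonneg e) (ht e he)) hp (fun e he hep => ?_) q
  calc walkCost (fun e => w e + t e) p = walkCost t p := hcost
    _ ≤ T := hT
    _ = w e := by rw [hw, if_neg hep]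
    _ ≤ w e + t e := le_add_of_nonneg_right (ht e he)

end Cost

/-- Hardness-reduction key step: given nonnegative traversal times `t` on the edges
of a simple graph `G` on a finite vertex type, a `u`–`v` path `p`, and weights
`w e = 0` for edges of `p` and `w e = T` otherwise, where `T` is the total traversal
time of all edges of `G`, the path `p` has minimal combined cost `w + t` among all
`u`–`v` paths. -/
theorem stmt_12 {V : Type*} [Fintype V] [DecidableEq V] (G : SimpleGraph V)
    [DecidableRel G.Adj] (t : Sym2 V → ℝ) (ht : ∀ e ∈ G.edgeSet, 0 ≤ t e)
    (u v : V) (p : G.Walk u v) (hp : p.IsPath)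
    (T : ℝ) (hT : T = ∑ e ∈ G.edgeFinset, t e)
    (w : Sym2 V → ℝ) (hw : ∀ e, w e = if e ∈ p.edges then 0 else T) :
    ∀ q : G.Walk u v, q.IsPath →
      (p.edges.map (fun e => w e + t e)).sum ≤ (q.edges.map (fun e => w e + t e)).sum := by
  intro q _
  exact stmt_12_general ht hp (hT ▸ walkCost_le_sum_edgeFinset ht hp.isTrail) hw q
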